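/- There is no [[n_q, n_q + n_c − 3, 2]]_2 quantum stabilizer code together with an [n_c, 1, 2]_2 classical code with n_q + n_c = n and n_c ≥ 1: the quantum Singleton bound forces n_c ≤ 1, and no [1,1,2]_2 classical code exists. Hence an [[n, n−3 : 1, 2]]_2 hybrid code cannot be obtained from the trivial construction combining a quantum code and a classical code. -/

import Mathlib

open Matrix
open scoped InnerProductSpace

/-- Single-qubit Pauli matrices, indexed by `ZMod 2`. -/
def sigmaX : Matrix (ZMod 2) (ZMod 2) ℂ := fun i j => if i = j then 0 else 1
def sigmaY : Matrix (ZMod 2) (ZMod 2) ℂ :=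
  fun i j => if i = j then 0 else if i = 0 then -Complex.I else Complex.I
def sigmaZ : Matrix (ZMod 2) (ZMod 2) ℂ :=
  fun i j => if i = j then (if i = 0 then 1 else -1) else 0

/-- The weight-one operator acting as the `2 × 2` matrix `P` on qubit `ℓ`
and as the identity elsewhere, on `n` qubits. -/
def opAt (n : ℕ) (ℓ : Fin n) (P : Matrix (ZMod 2) (ZMod 2) ℂ) :
    Matrix (Fin n → ZMod 2) (Fin n → ZMod 2) ℂ :=
  fun y z => if ∀ j, j ≠ ℓ → y j = z j then P (y ℓ) (z ℓ) else 0

/-- `isCode2 n Kdim`: there is an `((n, Kdim, 2))₂` quantum code, i.e. a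
`Kdim`-dimensional subspace of `(ℂ²)^{⊗n}` satisfying the Knill–Laflamme
conditions for all weight-one Pauli errors. -/
def isCode2 (n Kdim : ℕ) : Prop :=
  ∃ C : Submodule ℂ (EuclideanSpace ℂ (Fin n → ZMod 2)),
    Module.finrank ℂ C = Kdim ∧
    ∀ ℓ : Fin n, ∀ P ∈ ({sigmaX, sigmaY, sigmaZ} :
        Set (Matrix (ZMod 2) (ZMod 2) ℂ)),
      ∃ lam : ℂ, ∀ u ∈ C, ∀ v ∈ C,
        ⟪u, Matrix.toEuclideanLin (opAt n ℓ P) v⟫_ℂ = lam * ⟪u, v⟫_ℂ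

/-- An `[n, m, 2]₂` classical linear code: an `m`-dimensional subspace of
`𝔽₂ⁿ` all of whose nonzero codewords have Hamming weight at least `2`. -/
def isClassicalCode2 (n m : ℕ) : Prop :=
  ∃ C : Submodule (ZMod 2) (Fin n → ZMod 2),
    Module.finrank (ZMod 2) C = m ∧
    ∀ x ∈ C, x ≠ 0 → 2 ≤ (Finset.univ.filter (fun j => x j ≠ 0)).card

/-- The component of an `(m + 1)`-qubit vector along the basis state `a` of qubit `ℓ`. -/
def qubitSlice {m : ℕ} (ℓ : Fin (m + 1)) (a : ZMod 2) :
    EuclideanSpace ℂ (Fin (m + 1) → ZMod 2) →ₗ[ℂ] EuclideanSpace ℂ (Fin m → ZMod 2) where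
  toFun v := WithLp.toLp 2 fun y => v (ℓ.insertNth a y)
  map_add' _ _ := rfl
  map_smul' _ _ := rfl

lemma qubitSlice_apply {m : ℕ} (ℓ : Fin (m + 1)) (a : ZMod 2)
    (v : EuclideanSpace ℂ (Fin (m + 1) → ZMod 2)) (y : Fin m → ZMod 2) :
    qubitSlice ℓ a v y = v (ℓ.insertNth a y) := rfl

lemma sum_zmod_two {M : Type*} [AddCommMonoid M] (f : ZMod 2 → M) :
    ∑ a, f a = f 0 + f 1 :=
  Fin.sum_univ_two f

lemma sum_insertNth {m : ℕ} {M : Type*} [AddCommMonoid M] (ℓ : Fin (m + 1))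
    (f : (Fin (m + 1) → ZMod 2) → M) :
    ∑ y, f y = ∑ a, ∑ y, f (ℓ.insertNth a y) := by
  rw [← Fintype.sum_prod_type']
  exact ((Fin.insertNthEquiv (fun _ => ZMod 2) ℓ).sum_comp f).symm

lemma opAt_insertNth {m : ℕ} (ℓ : Fin (m + 1)) (P : Matrix (ZMod 2) (ZMod 2) ℂ)
    (a b : ZMod 2) (y z : Fin m → ZMod 2) :
    opAt (m + 1) ℓ P (ℓ.insertNth a y) (ℓ.insertNth b z) = if y = z then P a b else 0 := by
  have h : (∀ j, j ≠ ℓ → (ℓ.insertNth a y : Fin (m + 1) → ZMod 2) j =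
      (ℓ.insertNth b z : Fin (m + 1) → ZMod 2) j) ↔ y = z := by
    rw [Fin.forall_iff_succAbove ℓ]
    simp [Fin.succAbove_ne, funext_iff]
  simp only [opAt, h, Fin.insertNth_apply_same]

lemma inner_opAt {m : ℕ} (ℓ : Fin (m + 1)) (P : Matrix (ZMod 2) (ZMod 2) ℂ)
    (u v : EuclideanSpace ℂ (Fin (m + 1) → ZMod 2)) :
    ⟪u, Matrix.toEuclideanLin (opAt (m + 1) ℓ P) v⟫_ℂ =
      ∑ a, ∑ b, P a b * ⟪qubitSlice ℓ a u, qubitSlice ℓ b v⟫_ℂ := by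
  have h : ∀ a y, (Matrix.toEuclideanLin (opAt (m + 1) ℓ P) v) (ℓ.insertNth a y) =
      ∑ b, P a b * qubitSlice ℓ b v y := by
    intro a y
    change ∑ z, opAt (m + 1) ℓ P (ℓ.insertNth a y) z * v z = _
    rw [sum_insertNth ℓ]
    simp [opAt_insertNth, qubitSlice_apply]
  simp only [PiLp.inner_apply, RCLike.inner_apply]
  rw [sum_insertNth ℓ]
  refine Finset.sum_congr rfl fun a _ => ?_
  simp only [h, Finset.sum_mul, Finset.mul_sum]
  rw [Finset.sum_comm]
  simp only [qubitSlice_apply, mul_assoc]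

lemma inner_eq_sum_qubitSlice {m : ℕ} (ℓ : Fin (m + 1))
    (u v : EuclideanSpace ℂ (Fin (m + 1) → ZMod 2)) :
    ⟪u, v⟫_ℂ = ∑ a, ⟪qubitSlice ℓ a u, qubitSlice ℓ a v⟫_ℂ := by
  simp only [PiLp.inner_apply, RCLike.inner_apply, qubitSlice_apply]
  rw [sum_insertNth ℓ]

/-- The Knill–Laflamme conditions at qubit `ℓ` say that all code states share one reduced density
matrix `ρ` at `ℓ`. -/
lemma exists_reduced_state {m : ℕ} (ℓ : Fin (m + 1))
    (C : Submodule ℂ (EuclideanSpace ℂ (Fin (m + 1) → ZMod 2)))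
    (h : ∀ P ∈ ({sigmaX, sigmaY, sigmaZ} : Set (Matrix (ZMod 2) (ZMod 2) ℂ)),
      ∃ lam : ℂ, ∀ u ∈ C, ∀ v ∈ C,
        ⟪u, Matrix.toEuclideanLin (opAt (m + 1) ℓ P) v⟫_ℂ = lam * ⟪u, v⟫_ℂ) :
    ∃ ρ : Matrix (ZMod 2) (ZMod 2) ℂ, ∀ a b, ∀ u ∈ C, ∀ v ∈ C,
      ⟪qubitSlice ℓ a u, qubitSlice ℓ b v⟫_ℂ = ρ a b * ⟪u, v⟫_ℂ := by
  obtain ⟨x, hx⟩ := h sigmaX (by simp)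
  obtain ⟨y, hy⟩ := h sigmaY (by simp)
  obtain ⟨z, hz⟩ := h sigmaZ (by simp)
  refine ⟨fun a b => if a = 0 then (if b = 0 then (1 + z) / 2 else (x + Complex.I * y) / 2)
    else (if b = 0 then (x - Complex.I * y) / 2 else (1 - z) / 2), ?_⟩
  intro a b u hu v hv
  have hx' := hx u hu v hv
  have hy' := hy u hu v hv
  have hz' := hz u hu v hv
  have h1 := inner_eq_sum_qubitSlice ℓ u v
  have h10 : (1 : ZMod 2) ≠ 0 := by decide
  rw [inner_opAt] at hx' hy' hz'
  simp only [sum_zmod_two, sigmaX, sigmaY, sigmaZ, h10, h10.symm, if_true, if_false,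
    zero_mul, one_mul, zero_add, add_zero] at hx' hy' hz' h1
  have hI := Complex.I_mul_I
  have hcases : ∀ c : ZMod 2, c = 0 ∨ c = 1 := by decide
  rcases hcases a with rfl | rfl <;> rcases hcases b with rfl | rfl <;>
    simp only [h10, if_true, if_false]
  · linear_combination (1 / 2) * hz' - (1 / 2) * h1
  · linear_combination (1 / 2) * hx' + (Complex.I / 2) * hy' +
      (1 / 2) * (⟪qubitSlice ℓ 0 u, qubitSlice ℓ 1 v⟫_ℂ -
        ⟪qubitSlice ℓ 1 u, qubitSlice ℓ 0 v⟫_ℂ) * hI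
  · linear_combination (1 / 2) * hx' - (Complex.I / 2) * hy' -
      (1 / 2) * (⟪qubitSlice ℓ 0 u, qubitSlice ℓ 1 v⟫_ℂ -
        ⟪qubitSlice ℓ 1 u, qubitSlice ℓ 0 v⟫_ℂ) * hI
  · linear_combination -(1 / 2) * hz' - (1 / 2) * h1

lemma two_mul_finrank_le_of_det_ne_zero {m : ℕ} (ℓ : Fin (m + 1))
    (C : Submodule ℂ (EuclideanSpace ℂ (Fin (m + 1) → ZMod 2)))
    (ρ : Matrix (ZMod 2) (ZMod 2) ℂ) (hdet : ρ.det ≠ 0)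
    (hρ : ∀ a b, ∀ u ∈ C, ∀ v ∈ C,
      ⟪qubitSlice ℓ a u, qubitSlice ℓ b v⟫_ℂ = ρ a b * ⟪u, v⟫_ℂ) :
    2 * Module.finrank ℂ C ≤ 2 ^ m := by
  let f : (ZMod 2 → C) →ₗ[ℂ] EuclideanSpace ℂ (Fin m → ZMod 2) :=
    ∑ b, (qubitSlice ℓ b ∘ₗ C.subtype) ∘ₗ LinearMap.proj b
  have hf : Function.Injective f := by
    rw [injective_iff_map_eq_zero]
    intro w hw
    have hmul : ∀ u ∈ C, ρ *ᵥ (fun b => ⟪u, (w b : EuclideanSpace ℂ _)⟫_ℂ) = 0 := by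
      intro u hu
      funext a
      have := congrArg (fun t => ⟪qubitSlice ℓ a u, t⟫_ℂ) hw
      simpa [f, LinearMap.sum_apply, inner_sum, hρ _ _ u hu, mulVec, dotProduct] using this
    funext b
    have hb := congrFun (Matrix.eq_zero_of_mulVec_eq_zero hdet (hmul _ (w b).2)) b
    exact Subtype.ext (inner_self_eq_zero.1 hb)
  have := LinearMap.finrank_le_finrank_of_injective hf
  simpa [Module.finrank_pi_fintype, ZMod.card] using this

lemma sum_smul_qubitSlice_eq_zero {m : ℕ} (ℓ : Fin (m + 1))
    (C : Submodule ℂ (EuclideanSpace ℂ (Fin (m + 1) → ZMod 2)))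
    (ρ : Matrix (ZMod 2) (ZMod 2) ℂ)
    (hρ : ∀ a b, ∀ u ∈ C, ∀ v ∈ C,
      ⟪qubitSlice ℓ a u, qubitSlice ℓ b v⟫_ℂ = ρ a b * ⟪u, v⟫_ℂ)
    (w : ZMod 2 → ℂ) (hw : ρ *ᵥ w = 0)
    (v : EuclideanSpace ℂ (Fin (m + 1) → ZMod 2)) (hv : v ∈ C) :
    ∑ b, w b • qubitSlice ℓ b v = 0 := by
  have h : ∀ a, ⟪qubitSlice ℓ a v, ∑ b, w b • qubitSlice ℓ b v⟫_ℂ = 0 := by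
    intro a
    have ha : ∑ b, ρ a b * w b = 0 := congrFun hw a
    calc ⟪qubitSlice ℓ a v, ∑ b, w b • qubitSlice ℓ b v⟫_ℂ
        = (∑ b, ρ a b * w b) * ⟪v, v⟫_ℂ := by
          simp only [inner_sum, inner_smul_right, hρ _ _ v hv v hv, Finset.sum_mul]
          exact Finset.sum_congr rfl fun b _ => by ring
      _ = 0 := by rw [ha, zero_mul]
  rw [← inner_self_eq_zero (𝕜 := ℂ), sum_inner]
  exact Finset.sum_eq_zero fun a _ => by rw [inner_smul_left, h, mul_zero]

/-- A space of vectors that factor at each qubit with a common one-qubit state is at most a line. -/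
lemma finrank_le_one_of_local_relations {n : ℕ}
    (C : Submodule ℂ (EuclideanSpace ℂ (Fin n → ZMod 2)))
    (h : ∀ ℓ, ∃ w : ZMod 2 → ℂ, w ≠ 0 ∧ ∀ v ∈ C, ∀ y,
      ∑ b, w b * v (Function.update y ℓ b) = 0) :
    Module.finrank ℂ C ≤ 1 := by
  choose w hw0 hw using h
  have ht : ∀ ℓ, ∃ t, w ℓ t ≠ 0 := fun ℓ => Function.ne_iff.1 (hw0 ℓ)
  choose t ht using ht
  have key : ∀ v ∈ C, v (fun j => t j + 1) = 0 → ∀ F : Finset (Fin n), ∀ y,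
      (∀ j ∉ F, y j = t j + 1) → v y = 0 := by
    intro v hv hv0 F
    induction F using Finset.induction_on with
    | empty =>
      intro y hy
      rwa [show y = fun j => t j + 1 from funext fun j => hy j (Finset.notMem_empty j)]
    | insert ℓ F _ ih =>
      intro y hy
      have h1 : v (Function.update y ℓ (t ℓ + 1)) = 0 := by
        refine ih _ fun j hj => ?_
        by_cases hjl : j = ℓ
        · subst hjl; simp
        · rw [Function.update_of_ne hjl]
          exact hy j (by simp [hjl, hj])
      have hcases : ∀ c d : ZMod 2, c = d + 1 ∨ c = d := by decide
      rcases hcases (y ℓ) (t ℓ) with hyl | hyl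
      · rwa [← hyl, Function.update_eq_self] at h1
      · have h2 := hw ℓ v hv y
        rw [Finset.sum_eq_single (t ℓ)] at h2
        · rw [← hyl, Function.update_eq_self, hyl] at h2
          exact (mul_eq_zero.1 h2).resolve_left (ht ℓ)
        · intro b _ hb
          rw [(hcases b (t ℓ)).resolve_right hb, h1, mul_zero]
        · simp
  let f : C →ₗ[ℂ] ℂ :=
    { toFun := fun v => (v : EuclideanSpace ℂ (Fin n → ZMod 2)) fun j => t j + 1
      map_add' := fun _ _ => rfl
      map_smul' := fun _ _ => rfl }
  have hf : Function.Injective f := by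
    rw [injective_iff_map_eq_zero]
    intro v hv
    ext y
    exact key v v.2 hv Finset.univ y (by simp)
  simpa using LinearMap.finrank_le_finrank_of_injective hf

/-- The quantum Singleton bound for distance two. -/
lemma isCode2.four_mul_le {n K : ℕ} (h : isCode2 n K) (hK : 2 ≤ K) : 4 * K ≤ 2 ^ n := by
  obtain ⟨C, hC, hKL⟩ := h
  by_contra hlt
  have : Module.finrank ℂ C ≤ 1 := by
    refine finrank_le_one_of_local_relations C fun ℓ => ?_
    cases n with
    | zero => exact ℓ.elim0
    | succ m =>
      obtain ⟨ρ, hρ⟩ := exists_reduced_state ℓ C (hKL ℓ)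
      have hdet : ρ.det = 0 := by
        by_contra hdet
        have := two_mul_finrank_le_of_det_ne_zero ℓ C ρ hdet hρ
        rw [hC] at this
        rw [pow_succ] at hlt
        omega
      obtain ⟨w, hw0, hw⟩ := Matrix.exists_mulVec_eq_zero_iff.2 hdet
      refine ⟨w, hw0, fun v hv y => ?_⟩
      have := congrArg (fun x : EuclideanSpace ℂ (Fin m → ZMod 2) => x (ℓ.removeNth y))
        (sum_smul_qubitSlice_eq_zero ℓ C ρ hρ w hw v hv)
      simpa [qubitSlice_apply, Fin.insertNth_removeNth] using this
  omega

lemma not_isClassicalCode2_one : ¬ isClassicalCode2 1 1 := by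
  rintro ⟨C, hC, hd⟩
  have hbot : C ≠ ⊥ := by
    rintro rfl
    simp at hC
  obtain ⟨x, hx, hx0⟩ := C.exists_mem_ne_zero_of_ne_bot hbot
  have h2 := hd x hx hx0
  have h1 := Finset.card_le_univ (Finset.univ.filter fun j => x j ≠ 0)
  rw [Fintype.card_fin] at h1
  omega

/-- there is no `[[n_q, n_q + n_c − 3, 2]]₂` quantum code together
with an `[n_c, 1, 2]₂` classical code where `n_q + n_c = n` and `n_c ≥ 1` (and
the quantum code encodes at least one logical qubit, `n_q + n_c − 3 ≥ 1`):
the quantum Singleton bound forces `n_c ≤ 1`, and no `[1,1,2]₂` classical code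
exists.  Hence an `[[n, n−3 : 1, 2]]₂` hybrid code cannot arise from the trivial
construction combining a quantum code with a classical code. -/
theorem stmt_12 (n nq nc : ℕ) (hn : nq + nc = n) (hnc : 1 ≤ nc)
    (hk : 1 ≤ nq + nc - 3) :
    ¬ (isCode2 nq (2 ^ (nq + nc - 3)) ∧ isClassicalCode2 nc 1) := by
  rintro ⟨hq, hc⟩
  obtain rfl | hnc2 : nc = 1 ∨ 2 ≤ nc := by omega
  · exact not_isClassicalCode2_one hc
  · have hK : 2 ^ 1 ≤ 2 ^ (nq + nc - 3) := Nat.pow_le_pow_right (by norm_num) hk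
    have h4 := hq.four_mul_le hK
    have hlt : 2 ^ nq < 2 ^ (nq + nc - 3 + 2) := Nat.pow_lt_pow_right (by norm_num) (by omega)
    rw [pow_add] at hlt
    omega
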